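/- Let κ be an inaccessible cardinal and C ⊆ κ a closed unbounded set. Then for every perfect κ-tree p there is a perfect κ-tree q ⊆ p with C(q) ⊆ C. Hence the set D_C = {q ∈ Sacks(κ) : C(q) ⊆ C} is dense in Sacks(κ). -/

import Mathlib

open Set Cardinal

noncomputable section

/-- A node of the binary tree `2^{<κ}`: a binary sequence of ordinal length `len < κ`,
coded as a function on all ordinals that takes the value `false` from `len` onwards. -/
structure BNode (κ : Cardinal.{0}) : Type 1 where
  len : Ordinal.{0}
  len_lt : len < κ.ord
  val : Ordinal.{0} → Bool
  val_false : ∀ i, len ≤ i → val i = false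

namespace BNode

variable {κ : Cardinal.{0}}

/-- `s.Ext t` means that `t` extends `s`, i.e. `s ⊆ t` as partial functions
(`s` is an initial segment of `t`). -/
def Ext (s t : BNode κ) : Prop :=
  s.len ≤ t.len ∧ ∀ i, i < s.len → t.val i = s.val i

/-- `s.snoc b` is the concatenation `s⌢b`.  (When `κ` is an infinite cardinal the
`dite` always takes the first branch, since `κ.ord` is a limit ordinal.) -/
def snoc (s : BNode κ) (b : Bool) : BNode κ :=
  if h : s.len + 1 < κ.ord then
    { len := s.len + 1
      len_lt := h
      val := fun i => if i < s.len then s.val i else if i = s.len then b else false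
      val_false := by
        intro i hi
        have h1 : s.len < i :=
          lt_of_lt_of_le (by rw [Ordinal.add_one_eq_succ]; exact Order.lt_succ _) hi
        simp [not_lt_of_gt h1, h1.ne'] }
  else s

end BNode

/-- `C` is a closed unbounded subset of the ordinal `L`. -/
def IsClubIn (L : Ordinal.{0}) (C : Set Ordinal.{0}) : Prop :=
  (∀ c ∈ C, c < L) ∧
  (∀ o, o < L → o ≠ 0 → (∀ i, i < o → ∃ c ∈ C, i < c ∧ c < o) → o ∈ C) ∧
  (∀ i, i < L → ∃ c ∈ C, i < c)

/-- `s` splits in `p`: both `s⌢0` and `s⌢1` belong to `p`. -/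
def Splits {κ : Cardinal.{0}} (p : Set (BNode κ)) (s : BNode κ) : Prop :=
  s.snoc false ∈ p ∧ s.snoc true ∈ p

/-- `C` is a splitting club for `p`: a closed unbounded subset of `κ` such that a node
`s ∈ p` splits in `p` if and only if `length s ∈ C`. -/
def IsSplitClub {κ : Cardinal.{0}} (p : Set (BNode κ)) (C : Set Ordinal.{0}) : Prop :=
  IsClubIn κ.ord C ∧ ∀ s ∈ p, (Splits p s ↔ s.len ∈ C)

/-- `p ⊆ 2^{<κ}` is a perfect `κ`-tree:
(1) closed under initial segments;
(2) closed under unions of `⊆`-increasing chains of length `< κ` (the union being the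
unique node `u` extending every member of the chain and whose length is the supremum
of the lengths);
(3) every node has a splitting extension;
(4) there is a club `C ⊆ κ` such that a node of `p` splits iff its length lies in `C`. -/
def IsPerfectTree {κ : Cardinal.{0}} (p : Set (BNode κ)) : Prop :=
  (∀ t ∈ p, ∀ s : BNode κ, s.Ext t → s ∈ p) ∧
  (∀ η : Ordinal.{0}, η < κ.ord → ∀ f : Ordinal.{0} → BNode κ,
      (∀ α β, α < β → β < η → (f α).Ext (f β)) →
      (∀ α, α < η → f α ∈ p) →
      ∀ u : BNode κ, (∀ α, α < η → (f α).Ext u) →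
        (∀ i, i < u.len → ∃ α, α < η ∧ i < (f α).len) → u ∈ p) ∧
  (∀ s ∈ p, ∃ t ∈ p, s.Ext t ∧ Splits p t) ∧
  (∃ C : Set Ordinal.{0}, IsSplitClub p C)

/-- The canonical splitting club of `p`: the set of lengths of splitting nodes of `p`.
For a perfect `κ`-tree (with `κ` inaccessible) this coincides with the unique
splitting club `C(p)`. -/
def splitClub {κ : Cardinal.{0}} (p : Set (BNode κ)) : Set Ordinal.{0} :=
  {o | ∃ s ∈ p, s.len = o ∧ Splits p s}

/-- `Split_i(p)`: the nodes of `p` whose length is the `i`-th element of the increasing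
enumeration of the splitting club of `p`. -/
def SplitLev {κ : Cardinal.{0}} (p : Set (BNode κ)) (i : Ordinal.{0}) : Set (BNode κ) :=
  {s ∈ p | s.len = Ordinal.enumOrd (splitClub p) i}

/-- The thinning `p↾s = {t ∈ p : s ⊆ t or t ⊆ s}`. -/
def thinTree {κ : Cardinal.{0}} (p : Set (BNode κ)) (s : BNode κ) : Set (BNode κ) :=
  {t ∈ p | s.Ext t ∨ t.Ext s}

/-- A condition in `Sacks(κ,λ)`: a `λ`-indexed family of perfect `κ`-trees (coded as a
function on all ordinals which is the full tree `2^{<κ}` off `λ`) whose support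
(the set of coordinates where it is not the full tree) has cardinality at most `κ`. -/
def SacksCond (κ lam : Cardinal.{0}) (p : Ordinal.{0} → Set (BNode κ)) : Prop :=
  (∀ α, α < lam.ord → IsPerfectTree (p α)) ∧
  (∀ α, ¬ α < lam.ord → p α = Set.univ) ∧
  #{α : Ordinal.{0} | α < lam.ord ∧ p α ≠ Set.univ} ≤ Cardinal.lift.{1} κ

/-- The (coordinatewise) order on `Sacks(κ,λ)`. -/
def SacksLe {κ : Cardinal.{0}} (lam : Cardinal.{0}) (p q : Ordinal.{0} → Set (BNode κ)) : Prop :=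
  ∀ α, α < lam.ord → p α ⊆ q α

/-- The forcing `Sacks(κ,λ)` as a partial order. -/
def SacksProd (κ lam : Cardinal.{0}) : Type 1 :=
  {p : Ordinal.{0} → Set (BNode κ) // SacksCond κ lam p}

instance SacksProd.instPartialOrder (κ lam : Cardinal.{0}) : PartialOrder (SacksProd κ lam) where
  le p q := ∀ α, p.1 α ⊆ q.1 α
  le_refl p α := subset_rfl
  le_trans p q r h1 h2 α := (h1 α).trans (h2 α)
  le_antisymm p q h1 h2 := Subtype.ext (funext fun α => subset_antisymm (h1 α) (h2 α))

/-- A partial order is almost homogeneous if for any `p, q` there is an order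
automorphism `f` such that `f p` and `q` are compatible. -/
def AlmostHomogeneous (P : Type*) [Preorder P] : Prop :=
  ∀ p q : P, ∃ f : P ≃o P, ∃ r : P, r ≤ f p ∧ r ≤ q

/-- A condition in the Cohen forcing `Add(γ,λ)`: a partial function from `λ × γ` to `2`
(coded as a functional set of triples) of cardinality less than `γ`. -/
def CohenCond (γ lam : Cardinal.{0}) (s : Set (Ordinal.{0} × Ordinal.{0} × Bool)) : Prop :=
  (∀ x ∈ s, x.1 < lam.ord ∧ x.2.1 < γ.ord) ∧
  (∀ a b u v, (a, b, u) ∈ s → (a, b, v) ∈ s → u = v) ∧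
  #s < Cardinal.lift.{1} γ

/-- The Cohen forcing `Add(γ,λ)`, ordered by reverse inclusion. -/
def CohenPoset (γ lam : Cardinal.{0}) : Type 1 := {s // CohenCond γ lam s}

instance CohenPoset.instPartialOrder (γ lam : Cardinal.{0}) : PartialOrder (CohenPoset γ lam) where
  le p q := q.1 ⊆ p.1
  le_refl p := subset_rfl
  le_trans p q r h1 h2 := Set.Subset.trans h2 h1
  le_antisymm p q h1 h2 := Subtype.ext (subset_antisymm h2 h1)

/-- `q` is an `(S,a)`-thinning of `p`: on each coordinate `ξ ∈ S`, the tree `p ξ` is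
thinned below some node on its `a`-th splitting level, and `q` agrees with `p` off `S`. -/
def IsThinning {κ : Cardinal.{0}} (S : Set Ordinal.{0}) (a : Ordinal.{0})
    (p q : Ordinal.{0} → Set (BNode κ)) : Prop :=
  (∀ ξ, ξ ∉ S → q ξ = p ξ) ∧
  ∀ ξ ∈ S, ∃ s ∈ SplitLev (p ξ) a, q ξ = thinTree (p ξ) s

/-- `p` reduces `D`: for some `S ⊆ λ` of size `< κ` and some `a < κ`, every
`(S,a)`-thinning of `p` belongs to `D`. -/
def ReducesDense (κ lam : Cardinal.{0}) (p : SacksProd κ lam)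
    (D : Set (SacksProd κ lam)) : Prop :=
  ∃ S : Set Ordinal.{0}, S ⊆ Set.Iio lam.ord ∧ #S < Cardinal.lift.{1} κ ∧
    ∃ a : Ordinal.{0}, a < κ.ord ∧
      ∀ q : SacksProd κ lam, IsThinning S a p.1 q.1 → q ∈ D

namespace BNode

variable {κ : Cardinal.{0}}

/-- The node of length `β` whose values are those of `g` below `β`. -/
def trunc (g : Ordinal.{0} → Bool) (β : Ordinal.{0}) (hβ : β < κ.ord) : BNode κ where
  len := β
  len_lt := hβ
  val i := if i < β then g i else false
  val_false i hi := if_neg hi.not_gt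

lemma Ext.trans {s t u : BNode κ} (hst : s.Ext t) (htu : t.Ext u) : s.Ext u :=
  ⟨hst.1.trans htu.1, fun i hi => (htu.2 i (hi.trans_le hst.1)).trans (hst.2 i hi)⟩

lemma snoc_len (hκ : ℵ₀ ≤ κ) (s : BNode κ) (b : Bool) : (s.snoc b).len = s.len + 1 := by
  have h : s.len + 1 < κ.ord := (isSuccLimit_ord hκ).succ_lt s.len_lt
  simp [snoc, h]

lemma snoc_val_of_lt (hκ : ℵ₀ ≤ κ) (s : BNode κ) (b : Bool) {i : Ordinal.{0}} (hi : i < s.len) :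
    (s.snoc b).val i = s.val i := by
  have h : s.len + 1 < κ.ord := (isSuccLimit_ord hκ).succ_lt s.len_lt
  simp [snoc, h, hi]

lemma snoc_val_len (hκ : ℵ₀ ≤ κ) (s : BNode κ) (b : Bool) : (s.snoc b).val s.len = b := by
  have h : s.len + 1 < κ.ord := (isSuccLimit_ord hκ).succ_lt s.len_lt
  simp [snoc, h]

lemma ext_snoc (hκ : ℵ₀ ≤ κ) (s : BNode κ) (b : Bool) : s.Ext (s.snoc b) :=
  ⟨by rw [snoc_len hκ]; exact (Order.lt_succ _).le, fun _ hi => snoc_val_of_lt hκ s b hi⟩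

end BNode

/-- The intersection of two clubs in a regular uncountable cardinal is a club. -/
lemma IsClubIn.inter {κ : Cardinal.{0}} (hreg : κ.IsRegular) (hunc : ℵ₀ < κ)
    {C D : Set Ordinal.{0}} (hC : IsClubIn κ.ord C) (hD : IsClubIn κ.ord D) :
    IsClubIn κ.ord (C ∩ D) := by
  refine ⟨fun c hc => hC.1 c hc.1, fun o ho h0 h => ⟨hC.2.1 o ho h0 fun i hi => ?_,
    hD.2.1 o ho h0 fun i hi => ?_⟩, fun i hi => ?_⟩
  · obtain ⟨c, hc, h⟩ := h i hi
    exact ⟨c, hc.1, h⟩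
  · obtain ⟨c, hc, h⟩ := h i hi
    exact ⟨c, hc.2, h⟩
  · have step : ∀ x : Iio κ.ord, ∃ y : Iio κ.ord, x.1 < y.1 ∧
        (∃ c ∈ C, x.1 < c ∧ c < y.1) ∧ ∃ d ∈ D, x.1 < d ∧ d ≤ y.1 := by
      rintro ⟨x, hx⟩
      obtain ⟨c, hc, hxc⟩ := hC.2.2 x hx
      obtain ⟨d, hd, hcd⟩ := hD.2.2 c (hC.1 c hc)
      exact ⟨⟨d, hD.1 d hd⟩, hxc.trans hcd, ⟨c, hc, hxc, hcd⟩, d, hd, hxc.trans hcd, le_rfl⟩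
    choose next hlt hnC hnD using step
    let a : ℕ → Iio κ.ord := fun n => next^[n] ⟨i, hi⟩
    have ha : ∀ n, a (n + 1) = next (a n) := fun n => Function.iterate_succ_apply' _ _ _
    let o : Ordinal.{0} := ⨆ n, (a n).1
    have ho : o < κ.ord := by
      refine Ordinal.iSup_lt_of_lt_cof ?_ fun n => (a n).2
      rw [hreg.cof_ord]
      simpa using hunc
    have hle : ∀ n, (a n).1 ≤ o := Ordinal.le_iSup fun n => (a n).1
    have hlt' : ∀ n, (a n).1 < o := fun n =>
      ((hlt (a n)).trans_eq (congrArg Subtype.val (ha n)).symm).trans_le (hle (n + 1))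
    have h0 : o ≠ 0 := (zero_le.trans_lt (hlt' 0)).ne'
    refine ⟨o, ⟨hC.2.1 o ho h0 fun j hj => ?_, hD.2.1 o ho h0 fun j hj => ?_⟩, hlt' 0⟩
    · obtain ⟨n, hn⟩ := Ordinal.lt_iSup_iff.1 hj
      obtain ⟨c, hc, h1, h2⟩ := hnC (a n)
      exact ⟨c, hc, hn.trans h1, (h2.trans_eq (congrArg Subtype.val (ha n)).symm).trans (hlt' _)⟩
    · obtain ⟨n, hn⟩ := Ordinal.lt_iSup_iff.1 hj
      obtain ⟨d, hd, h1, h2⟩ := hnD (a n)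
      exact ⟨d, hd, hn.trans h1,
        (h2.trans_eq (congrArg Subtype.val (ha n)).symm).trans_lt (hlt' _)⟩

/-- The leftmost branch through `s`: a function on ordinals that agrees with `s` below `s.len`
and from then on takes the value `true` only where no node of `p` permits `false`. -/
lemma exists_leftmost {κ : Cardinal.{0}} (p : Set (BNode κ)) (s : BNode κ) :
    ∃ g : Ordinal.{0} → Bool, (∀ i < s.len, g i = s.val i) ∧
      ∀ i, s.len ≤ i → (g i = false ↔
        ∃ u ∈ p, u.len = i + 1 ∧ (∀ j < i, u.val j = g j) ∧ u.val i = false) := by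
  classical
  let F : ∀ i : Ordinal.{0}, (∀ j, j < i → Bool) → Bool := fun i ih =>
    if i < s.len then s.val i else decide (¬ ∃ u ∈ p, u.len = i + 1 ∧
      (∀ j, ∀ h : j < i, u.val j = ih j h) ∧ u.val i = false)
  let g : Ordinal.{0} → Bool := (wellFounded_lt (α := Ordinal.{0})).fix F
  have hg : ∀ i, g i = F i fun j _ => g j := fun i => WellFounded.fix_eq _ F i
  refine ⟨g, fun i hi => ?_, fun i hi => ?_⟩
  · rw [hg]
    exact if_pos hi
  · rw [hg]
    simp only [F, if_neg hi.not_gt, decide_eq_false_iff_not, not_not]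

/-- In a perfect tree, every node can be prolonged to a node of any larger length that takes the
value `false` at all new splitting levels. -/
lemma IsPerfectTree.exists_leftmost_ext {κ : Cardinal.{0}} (hκ : ℵ₀ ≤ κ) {p : Set (BNode κ)}
    (hp : IsPerfectTree p) {D : Set Ordinal.{0}} (hD : IsSplitClub p D) {s : BNode κ}
    (hs : s ∈ p) {β : Ordinal.{0}} (hsβ : s.len ≤ β) (hβ : β < κ.ord) :
    ∃ t ∈ p, t.len = β ∧ s.Ext t ∧ ∀ i ∈ D, s.len ≤ i → i < β → t.val i = false := by
  obtain ⟨hseg, hchain, hsplit, -⟩ := hp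
  obtain ⟨g, hgs, hg⟩ := exists_leftmost p s
  have key : ∀ β, β < κ.ord → ∃ t ∈ p, t.len = β ∧ ∀ i < β, t.val i = g i := by
    intro β
    induction β using Ordinal.limitRecOn with
    | zero =>
      intro h
      exact ⟨BNode.trunc g 0 h, hseg s hs _ ⟨zero_le, fun i hi => absurd hi not_lt_bot⟩,
        rfl, fun i hi => absurd hi not_lt_bot⟩
    | add_one γ ih =>
      intro h
      have hγ : γ < γ + 1 := Order.lt_succ γ
      obtain ⟨t, ht, htl, htg⟩ := ih (hγ.trans h)
      by_cases hsγ : γ < s.len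
      · refine ⟨BNode.trunc g _ h, hseg s hs _ ⟨Order.succ_le_of_lt hsγ, fun i hi => ?_⟩, rfl,
          fun i hi => if_pos hi⟩
        have hi' : i < γ + 1 := hi
        have : i < s.len := hi'.trans_le (Order.succ_le_of_lt hsγ)
        exact (hgs i this).symm.trans (if_pos hi).symm
      · rw [not_lt] at hsγ
        obtain ⟨w, -, htw, hw, -⟩ := hsplit t ht
        let w' := w.snoc false
        have htw' : t.Ext w' := htw.trans (BNode.ext_snoc hκ w false)
        have hlen : γ + 1 ≤ w'.len := by
          rw [BNode.snoc_len hκ, ← htl]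
          gcongr
          exact htw.1
        cases hgγ : g γ with
        | false =>
          obtain ⟨u, hu, hul, hug, huγ⟩ := (hg γ hsγ).1 hgγ
          refine ⟨u, hu, hul, fun i hi => ?_⟩
          obtain h | rfl := (Order.lt_succ_iff.1 hi).lt_or_eq
          · exact hug i h
          · rw [huγ, hgγ]
        | true =>
          have hmem : BNode.trunc w'.val (γ + 1) h ∈ p :=
            hseg w' hw _ ⟨hlen, fun i hi => (if_pos hi).symm⟩
          have hval : ∀ j < γ, w'.val j = g j := fun j hj => by
            rw [htw'.2 j (hj.trans_eq htl.symm), htg j hj]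
          refine ⟨_, hmem, rfl, fun i hi => (if_pos hi).trans ?_⟩
          obtain h' | rfl := (Order.lt_succ_iff.1 hi).lt_or_eq
          · exact hval i h'
          · by_contra hne
            rw [hgγ, Bool.not_eq_true] at hne
            have := (hg i hsγ).2 ⟨_, hmem, rfl,
              fun j hj => (if_pos (hj.trans hγ)).trans (hval j hj), (if_pos hγ).trans hne⟩
            simp [hgγ] at this
    | limit β hβ ih =>
      intro h
      let f : Ordinal.{0} → BNode κ := fun α =>
        if hα : α < β then BNode.trunc g α (hα.trans h) else s
      have hf : ∀ α, ∀ hα : α < β, f α = BNode.trunc g α (hα.trans h) := fun α hα => dif_pos hα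
      refine ⟨BNode.trunc g β h, hchain β h f (fun α γ hαγ hγ => ?_) (fun α hα => ?_) _
        (fun α hα => ?_) (fun i hi => ?_), rfl, fun i hi => if_pos hi⟩
      · rw [hf α (hαγ.trans hγ), hf γ hγ]
        exact ⟨hαγ.le, fun i hi => (if_pos (hi.trans hαγ)).trans (if_pos hi).symm⟩
      · rw [hf α hα]
        obtain ⟨t, ht, htl, htg⟩ := ih α hα (hα.trans h)
        exact hseg t ht _ ⟨htl.ge, fun i hi => (htg i hi).trans (if_pos hi).symm⟩
      · rw [hf α hα]
        exact ⟨hα.le, fun i hi => (if_pos (hi.trans hα)).trans (if_pos hi).symm⟩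
      · have hi' : i + 1 < β := hβ.succ_lt hi
        refine ⟨i + 1, hi', ?_⟩
        rw [hf _ hi']
        exact Order.lt_succ i
  obtain ⟨t, ht, htl, htg⟩ := key β hβ
  refine ⟨t, ht, htl, ⟨hsβ.trans_eq htl.symm, fun i hi => ?_⟩, fun i hiD hi hiβ => ?_⟩
  · rw [htg i (hi.trans_le hsβ), hgs i hi]
  · obtain ⟨v, hv, hvl, hvg⟩ := key i (hiβ.trans hβ)
    have hvsplit : Splits p v := (hD.2 v hv).2 (hvl ▸ hiD)
    rw [htg i hiβ, hg i hi]
    subst hvl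
    exact ⟨_, hvsplit.1, BNode.snoc_len hκ v false,
      fun j hj => (BNode.snoc_val_of_lt hκ v false hj).trans (hvg j hj),
      BNode.snoc_val_len hκ v false⟩

/-- For every club `C ⊆ κ` and every perfect `κ`-tree `p` there is a
perfect `κ`-tree `q ⊆ p` with `C(q) ⊆ C`.  Hence `D_C = {q : C(q) ⊆ C}` is dense in
`Sacks(κ)`. -/
theorem sacks_dense_splitClub_subset (κ : Cardinal.{0}) (hκ : κ.IsInaccessible)
    (C : Set Ordinal.{0}) (hC : IsClubIn κ.ord C)
    (p : Set (BNode κ)) (hp : IsPerfectTree p) :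
    ∃ q : Set (BNode κ), IsPerfectTree q ∧ q ⊆ p ∧
      ∃ Cq : Set Ordinal.{0}, IsSplitClub q Cq ∧ Cq ⊆ C := by
  have hω : ℵ₀ ≤ κ := hκ.aleph0_lt.le
  have hp' := hp
  obtain ⟨hseg, hchain, -, D, hD⟩ := hp'
  have hE : IsClubIn κ.ord (C ∩ D) := hC.inter hκ.isRegular hκ.aleph0_lt hD.1
  let q : Set (BNode κ) := {t ∈ p | ∀ i < t.len, i ∈ D → i ∉ C → t.val i = false}
  have hq : IsSplitClub q (C ∩ D) := by
    refine ⟨hE, fun s hs => ⟨fun h => ?_, fun h => ?_⟩⟩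
    · have hsD : s.len ∈ D := (hD.2 s hs.1).1 ⟨h.1.1, h.2.1⟩
      refine ⟨by_contra fun hsC => ?_, hsD⟩
      have hval := h.2.2 s.len (by rw [BNode.snoc_len hω]; exact Order.lt_succ _) hsD hsC
      simp [BNode.snoc_val_len hω] at hval
    · have hsnoc : ∀ b, s.snoc b ∈ p → s.snoc b ∈ q := fun b hb => by
        refine ⟨hb, fun i hi hiD hiC => ?_⟩
        rw [BNode.snoc_len hω] at hi
        obtain hlt | rfl := (Order.lt_succ_iff.1 hi).lt_or_eq
        · rw [BNode.snoc_val_of_lt hω s b hlt]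
          exact hs.2 i hlt hiD hiC
        · exact absurd h.1 hiC
      have hsp := (hD.2 s hs.1).2 h.2
      exact ⟨hsnoc _ hsp.1, hsnoc _ hsp.2⟩
  refine ⟨q, ⟨fun t ht s hst => ?_, fun η hη f hf hfq u hfu hu => ?_, fun s hs => ?_, _, hq⟩,
    fun t ht => ht.1, _, hq, inter_subset_left⟩
  · exact ⟨hseg t ht.1 s hst, fun i hi hiD hiC =>
      (hst.2 i hi).symm.trans (ht.2 i (hi.trans_le hst.1) hiD hiC)⟩
  · refine ⟨hchain η hη f hf (fun α hα => (hfq α hα).1) u hfu hu, fun i hi hiD hiC => ?_⟩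
    obtain ⟨α, hα, hiα⟩ := hu i hi
    rw [(hfu α hα).2 i hiα]
    exact (hfq α hα).2 i hiα hiD hiC
  · obtain ⟨c, hc, hsc⟩ := hE.2.2 s.len s.len_lt
    obtain ⟨t, ht, rfl, hst, htD⟩ :=
      hp.exists_leftmost_ext hω hD hs.1 hsc.le (hE.1 c hc)
    have htq : t ∈ q := by
      refine ⟨ht, fun i hi hiD hiC => ?_⟩
      obtain h | h := lt_or_ge i s.len
      · rw [hst.2 i h]
        exact hs.2 i h hiD hiC
      · exact htD i hiD h hi
    exact ⟨t, htq, hst, (hq.2 t htq).2 hc⟩
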